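/- Let n ≥ 1 and θ ∈ (0,2]. The function φ_c on ℝ^n defined by φ_c(x) := |x|^{−n} [log(e + 1/|x|)]^{−n/θ−1} for x ≠ 0 belongs to the uniformly local weak Zygmund type space 𝔏_{ul}^{1,∞}(log 𝔏)^{n/θ}, i.e. sup_{z∈ℝ^n} ‖φ_c · χ_{B(z,1)}‖_{𝔏^{1,∞}(log 𝔏)^{n/θ}} < ∞. -/

import Mathlib

open MeasureTheory Real Set ENNReal

noncomputable def logFac (s : ℝ) : ℝ := Real.log (Real.exp 1 + 1 / s)

noncomputable def zygNorm (n : ℕ) (q α : ℝ)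
    (f : EuclideanSpace ℝ (Fin n) → ℝ) : ℝ≥0∞ :=
  ⨆ s : Set.Ioi (0 : ℝ),
    (ENNReal.ofReal (logFac s.1) ^ α *
      ⨆ E : {E : Set (EuclideanSpace ℝ (Fin n)) //
          MeasurableSet E ∧ volume E = ENNReal.ofReal s.1},
        ∫⁻ x in E.1, ENNReal.ofReal (|f x| ^ q)) ^ (1 / q)

noncomputable def zygNormUL (n : ℕ) (q α ρ : ℝ)
    (f : EuclideanSpace ℝ (Fin n) → ℝ) : ℝ≥0∞ :=
  ⨆ z : EuclideanSpace ℝ (Fin n),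
    zygNorm n q α ((Metric.ball z ρ).indicator f)

lemma lf_one_le {s : ℝ} (hs : 0 < s) : 1 ≤ logFac s := by
  unfold logFac
  rw [Real.le_log_iff_exp_le (by positivity)]
  have : 0 < 1 / s := by positivity
  linarith

lemma lf_anti {s t : ℝ} (hs : 0 < s) (hst : s ≤ t) : logFac t ≤ logFac s := by
  unfold logFac
  have ht : 0 < t := lt_of_lt_of_le hs hst
  apply Real.log_le_log (by positivity)
  have := one_div_le_one_div_of_le hs hst
  linarith

lemma lf_pow {r : ℝ} (hr : 0 < r) {m : ℕ} (hm : m ≠ 0) :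
    logFac (r ^ m) ≤ m * logFac r := by
  unfold logFac
  rw [← Real.log_pow]
  apply Real.log_le_log (by positivity)
  have h1 : (Real.exp 1) ^ m + (1 / r) ^ m ≤ (Real.exp 1 + 1 / r) ^ m :=
    pow_add_pow_le (by positivity) (by positivity) hm
  have h2 : Real.exp 1 ≤ Real.exp 1 ^ m :=
    le_self_pow₀ (Real.one_le_exp (by norm_num)) hm
  rw [one_div_pow] at h1
  linarith

lemma lf_deriv {a t : ℝ} (ht : 0 < t) :
    HasDerivAt (fun t => logFac t ^ (-a))
      (t⁻¹ * (a * logFac t ^ (-a - 1) / (Real.exp 1 * t + 1))) t := by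
  have h0 : HasDerivAt (fun t : ℝ => Real.exp 1 + 1 / t) (-(t ^ 2)⁻¹) t := by
    simpa using (hasDerivAt_inv ht.ne').const_add (Real.exp 1)
  have hp : 0 < Real.exp 1 + 1 / t := by positivity
  have h1 := h0.log hp.ne'
  have hL := lf_one_le ht
  have h2 := h1.rpow_const (p := -a) (Or.inl (by unfold logFac at hL; linarith))
  unfold logFac
  convert h2 using 1
  have : Real.exp 1 * t + 1 ≠ 0 := by positivity
  field_simp

lemma lf_tendsto {a : ℝ} (ha : 0 < a) :
    Filter.Tendsto (fun t => logFac t ^ (-a)) (nhdsWithin 0 (Ioi 0)) (nhds 0) := by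
  apply (tendsto_rpow_neg_atTop ha).comp
  unfold logFac
  apply Real.tendsto_log_atTop.comp
  apply Filter.tendsto_atTop_add_const_left
  exact (tendsto_inv_nhdsGT_zero (𝕜 := ℝ)).congr fun x => (one_div x).symm

lemma lf_int {a r : ℝ} (ha : 0 < a) (hr : 0 < r) :
    IntegrableOn (fun t => t⁻¹ * (a * logFac t ^ (-a - 1) / (Real.exp 1 * t + 1))) (Ioc 0 r) ∧
    ∫ t in Ioc 0 r, t⁻¹ * (a * logFac t ^ (-a - 1) / (Real.exp 1 * t + 1)) = logFac r ^ (-a) := by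
  set g : ℝ → ℝ := fun t => if t ≤ 0 then 0 else logFac t ^ (-a) with hg
  have hgd : ∀ t, 0 < t → HasDerivAt g
      (t⁻¹ * (a * logFac t ^ (-a - 1) / (Real.exp 1 * t + 1))) t := by
    intro t ht
    apply (lf_deriv ht).congr_of_eventuallyEq
    filter_upwards [lt_mem_nhds ht] with u hu
    simp [hg, not_le.mpr hu]
  have hgc : ContinuousOn g (Icc 0 r) := by
    intro t ht
    rcases ht.1.eq_or_lt with h | h
    · subst h
      have h1 : ContinuousWithinAt g (Ioi 0) 0 := by
        unfold ContinuousWithinAt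
        have : g 0 = 0 := by simp [hg]
        rw [this]
        apply (lf_tendsto ha).congr'
        filter_upwards [self_mem_nhdsWithin] with u hu
        have hu : 0 < u := hu
        simp [hg, not_le.mpr hu]
      exact (continuousWithinAt_Ioi_iff_Ici.mp h1).mono Icc_subset_Ici_self
    · exact (hgd t h).continuousAt.continuousWithinAt
  have hi := intervalIntegral.integrableOn_deriv_of_nonneg hgc (fun x hx => hgd x hx.1) (by
    intro x hx
    have := lf_one_le hx.1
    have := hx.1
    positivity)
  refine ⟨hi, ?_⟩
  have := intervalIntegral.integral_eq_sub_of_hasDerivAt_of_le hr.le hgc (fun x hx => hgd x hx.1)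
    ((intervalIntegrable_iff_integrableOn_Ioc_of_le hr.le).2 hi)
  rw [intervalIntegral.integral_of_le hr.le] at this
  rw [this]
  simp [hg, not_le.mpr hr]

lemma ball_bound (n : ℕ) (hn : 1 ≤ n) {a : ℝ} (ha : 0 < a) :
    ∃ C : ℝ, 0 ≤ C ∧ ∀ r : ℝ, 0 < r → r ≤ 1 →
      ∫⁻ x in Metric.ball (0 : EuclideanSpace ℝ (Fin n)) r,
        ENNReal.ofReal (‖x‖ ^ (-(n : ℝ)) * logFac ‖x‖ ^ (-a - 1)) ≤
      ENNReal.ofReal (C * logFac r ^ (-a)) := by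
  haveI : Nonempty (Fin n) := ⟨⟨0, hn⟩⟩
  have hdim : Module.finrank ℝ (EuclideanSpace ℝ (Fin n)) = n := by simp
  set V : ℝ := (volume : Measure (EuclideanSpace ℝ (Fin n))).real (Metric.ball 0 1) with hV
  have hV0 : 0 ≤ V := measureReal_nonneg
  refine ⟨(Real.exp 1 + 1) / a * (n * V), by positivity, ?_⟩
  intro r hr hr1
  set f : ℝ → ℝ := fun y => y ^ (-(n : ℝ)) * (a * logFac y ^ (-a - 1) / (Real.exp 1 * y + 1)) with hf
  obtain ⟨hi, hint⟩ := lf_int ha hr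
  have hfy : ∀ y : ℝ, 0 < y → y ^ (n - 1) * f y =
      y⁻¹ * (a * logFac y ^ (-a - 1) / (Real.exp 1 * y + 1)) := by
    intro y hy
    simp only [hf]
    rw [← mul_assoc]
    congr 1
    rw [Real.rpow_neg hy.le, Real.rpow_natCast]
    obtain ⟨m, rfl⟩ : ∃ m, n = m + 1 := ⟨n - 1, by omega⟩
    simp only [Nat.add_sub_cancel]
    field_simp
    ring
  have hf0 : ∀ x : EuclideanSpace ℝ (Fin n), 0 ≤ f ‖x‖ := by
    intro x
    simp only [hf]
    rcases (norm_nonneg x).eq_or_lt with h | h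
    · rw [← h]
      have : (1:ℝ) = logFac 0 := by simp [logFac]
      rw [← this]; simp [ha.le]; positivity
    · have := lf_one_le h
      positivity
  have hI : IntegrableOn (fun x : EuclideanSpace ℝ (Fin n) => f ‖x‖) (Metric.ball 0 r) := by
    rw [integrableOn_fun_norm_addHaar, hdim]
    refine (integrableOn_congr_fun ?_ measurableSet_Ioo).2 (hi.mono_set Ioo_subset_Ioc_self)
    intro y hy
    exact hfy y hy.1
  have hval : ∫ x in Metric.ball (0 : EuclideanSpace ℝ (Fin n)) r, f ‖x‖ = n * (V * logFac r ^ (-a)) := by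
    rw [← integral_indicator measurableSet_ball]
    have h1 : ∀ x : EuclideanSpace ℝ (Fin n),
        (Metric.ball 0 r).indicator (fun x => f ‖x‖) x = (Iio r).indicator f ‖x‖ := by
      intro x; simp [indicator]
    simp_rw [h1]
    rw [integral_fun_norm_addHaar volume ((Iio r).indicator f), hdim]
    simp only [nsmul_eq_mul, smul_eq_mul]
    rw [← hint, integral_Ioc_eq_integral_Ioo, ← integral_indicator measurableSet_Ioo,
      ← integral_indicator measurableSet_Ioi]
    congr 3
    ext y
    by_cases hy : 0 < y
    · by_cases hyr : y < r
      · simp only [indicator, mem_Ioi, hy, mem_Iio, hyr, mem_Ioo, and_self, if_true]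
        exact hfy y hy
      · simp [indicator, hyr]
    · simp [indicator, hy]
  calc _ ≤ ∫⁻ x in Metric.ball (0 : EuclideanSpace ℝ (Fin n)) r,
        ENNReal.ofReal ((Real.exp 1 + 1) / a * f ‖x‖) := by
        apply setLIntegral_mono' measurableSet_ball
        intro x hx
        apply ENNReal.ofReal_le_ofReal
        rcases (norm_nonneg x).eq_or_lt with h | h
        · have : (0:ℝ) ^ (-(n:ℝ)) = 0 := Real.zero_rpow (by simp; omega)
          simp only [hf, ← h, this, zero_mul, mul_zero, le_refl]
        · have hx1 : ‖x‖ ≤ 1 := by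
            have : ‖x‖ < r := by simpa using hx
            linarith
          have hL := lf_one_le h
          have h3 : 1 ≤ (Real.exp 1 + 1) / (Real.exp 1 * ‖x‖ + 1) := by
            rw [le_div_iff₀ (by positivity)]
            nlinarith [Real.exp_pos 1]
          have h4 : (Real.exp 1 + 1) / a * f ‖x‖ =
            (‖x‖ ^ (-(n : ℝ)) * logFac ‖x‖ ^ (-a - 1)) *
              ((Real.exp 1 + 1) / (Real.exp 1 * ‖x‖ + 1)) := by
            simp only [hf]
            field_simp
          rw [h4]
          exact le_mul_of_one_le_right (by positivity) h3
    _ = ENNReal.ofReal (∫ x in Metric.ball (0 : EuclideanSpace ℝ (Fin n)) r,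
        (Real.exp 1 + 1) / a * f ‖x‖) := by
        rw [ofReal_integral_eq_lintegral_ofReal (hI.const_mul _)]
        exact Filter.Eventually.of_forall fun x => mul_nonneg (by positivity) (hf0 x)
    _ ≤ _ := by
        rw [integral_const_mul, hval]
        apply le_of_eq; congr 1; ring

lemma lf_small {a : ℝ} (ha : 0 < a) : ∃ C : ℝ, 0 ≤ C ∧ ∀ s : ℝ, 0 < s → s ≤ 1 →
    logFac s ^ a * s ^ (1 / 2 : ℝ) ≤ C := by
  refine ⟨((Real.exp 1 + 1) ^ (1 / (2 * a)) / (1 / (2 * a))) ^ a, by positivity, ?_⟩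
  intro s hs hs1
  have hL := lf_one_le hs
  have h1 : s ^ (1 / 2 : ℝ) = (s ^ (1 / (2 * a))) ^ a := by
    rw [← Real.rpow_mul hs.le]; congr 1; field_simp
  rw [h1, ← Real.mul_rpow (by linarith) (by positivity)]
  apply Real.rpow_le_rpow (by positivity) _ ha.le
  have h2 : logFac s ≤ (Real.exp 1 + 1 / s) ^ (1 / (2 * a)) / (1 / (2 * a)) :=
    Real.log_le_rpow_div (by positivity) (by positivity)
  calc _ ≤ (Real.exp 1 + 1 / s) ^ (1 / (2 * a)) / (1 / (2 * a)) * s ^ (1 / (2 * a)) := by gcongr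
    _ = ((Real.exp 1 + 1 / s) * s) ^ (1 / (2 * a)) / (1 / (2 * a)) := by
      rw [Real.mul_rpow (by positivity) hs.le]; ring
    _ ≤ _ := by
      gcongr
      have : (Real.exp 1 + 1 / s) * s = Real.exp 1 * s + 1 := by field_simp
      rw [this]
      nlinarith [Real.exp_pos 1]

lemma phi_le (n : ℕ) {a r t : ℝ} (ha : 0 < a) (hr : 0 < r) (h : r ≤ t) :
    t ^ (-(n : ℝ)) * logFac t ^ (-a - 1) ≤ r ^ (-(n : ℝ)) := by
  have ht : 0 < t := by linarith
  have h1 : logFac t ^ (-a - 1) ≤ 1 :=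
    Real.rpow_le_one_of_one_le_of_nonpos (lf_one_le ht) (by linarith)
  have h2 : t ^ (-(n : ℝ)) ≤ r ^ (-(n : ℝ)) :=
    Real.rpow_le_rpow_of_nonpos hr h (by simp)
  exact (mul_le_of_le_one_right (by positivity) h1).trans h2

theorem stmt19 (n : ℕ) (hn : 1 ≤ n) (θ : ℝ) (hθ0 : 0 < θ) (hθ2 : θ ≤ 2) :
    zygNormUL n 1 ((n : ℝ) / θ) 1
      (fun x : EuclideanSpace ℝ (Fin n) =>
        ‖x‖ ^ (-(n : ℝ)) * logFac ‖x‖ ^ (-(n : ℝ) / θ - 1)) < ⊤ := by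
  have hn0 : (0:ℝ) < n := by exact_mod_cast hn
  rw [neg_div]
  set a : ℝ := (n : ℝ) / θ with haa
  have ha : 0 < a := by positivity
  obtain ⟨C, hC, hball⟩ := ball_bound n hn ha
  obtain ⟨D, hD, hsmall⟩ := lf_small ha
  set φ : EuclideanSpace ℝ (Fin n) → ℝ :=
    fun x => ‖x‖ ^ (-(n : ℝ)) * logFac ‖x‖ ^ (-a - 1) with hφ
  have hφ0 : ∀ x, 0 ≤ φ x := by
    intro x
    have : 0 ≤ logFac ‖x‖ := by
      rcases (norm_nonneg x).eq_or_lt with h | h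
      · rw [← h]; simp [logFac]
      · linarith [lf_one_le h]
    simp only [hφ]
    positivity
  set K1 : ℝ≥0∞ := ENNReal.ofReal ((((2 * n : ℕ) : ℝ)) ^ a * C + D)
  set K2 : ℝ≥0∞ := ENNReal.ofReal (logFac 1 ^ a) *
    (ENNReal.ofReal (C * logFac 1 ^ (-a)) + volume (Metric.ball (0 : EuclideanSpace ℝ (Fin n)) 1))
  have hK : K1 + K2 < ⊤ := by
    have : volume (Metric.ball (0 : EuclideanSpace ℝ (Fin n)) 1) < ⊤ := measure_ball_lt_top
    refine ENNReal.add_lt_top.2 ⟨ENNReal.ofReal_lt_top, ?_⟩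
    exact ENNReal.mul_lt_top ENNReal.ofReal_lt_top
      (ENNReal.add_lt_top.2 ⟨ENNReal.ofReal_lt_top, this⟩)
  refine lt_of_le_of_lt ?_ hK
  unfold zygNormUL zygNorm
  refine iSup_le fun z => iSup_le fun ⟨s, hs⟩ => ?_
  have hs : 0 < s := hs
  simp only [div_one, ENNReal.rpow_one, Real.rpow_one]
  rw [ENNReal.mul_iSup]
  refine iSup_le fun ⟨E, hE, hEs⟩ => ?_
  have hL := lf_one_le hs
  rw [ENNReal.ofReal_rpow_of_pos (by linarith)]
  simp only
  have hind : ∀ x, |(Metric.ball z 1).indicator φ x| ≤ φ x := by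
    intro x
    by_cases hx : x ∈ Metric.ball z 1
    · rw [indicator_of_mem hx, abs_of_nonneg (hφ0 x)]
    · rw [indicator_of_notMem hx, abs_zero]; exact hφ0 x
  have key : ∀ r, 0 < r → r ≤ 1 →
      ∫⁻ x in E, ENNReal.ofReal |(Metric.ball z 1).indicator φ x| ≤
      ENNReal.ofReal (C * logFac r ^ (-a)) +
      ∫⁻ x in E \ Metric.ball 0 r, ENNReal.ofReal |(Metric.ball z 1).indicator φ x| := by
    intro r hr hr1
    rw [← lintegral_inter_add_diff _ E (measurableSet_ball (x := 0) (ε := r))]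
    gcongr
    refine le_trans (lintegral_mono_set inter_subset_right) (le_trans ?_ (hball r hr hr1))
    exact lintegral_mono fun x => ENNReal.ofReal_le_ofReal (hind x)
  rcases le_total s 1 with hs1 | hs1
  · refine le_trans ?_ le_self_add
    set r : ℝ := s ^ (1 / (2 * n : ℝ)) with hr'
    have hr : 0 < r := by positivity
    have hr1 : r ≤ 1 := Real.rpow_le_one hs.le hs1 (by positivity)
    have hrs : r ^ (2 * n) = s := by
      rw [hr', ← Real.rpow_natCast, ← Real.rpow_mul hs.le]
      have : 1 / (2 * n : ℝ) * ((2 * n : ℕ) : ℝ) = 1 := by push_cast; field_simp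
      rw [this, Real.rpow_one]
    have hrn : r ^ (-(n:ℝ)) * s = s ^ (1 / 2 : ℝ) := by
      rw [hr', ← Real.rpow_mul hs.le]
      nth_rewrite 2 [← Real.rpow_one s]
      rw [← Real.rpow_add hs]
      congr 1; field_simp; norm_num
    have h2 : ∫⁻ x in E \ Metric.ball 0 r, ENNReal.ofReal |(Metric.ball z 1).indicator φ x| ≤
        ENNReal.ofReal (s ^ (1 / 2 : ℝ)) := by
      calc _ ≤ ∫⁻ x in E \ Metric.ball 0 r, ENNReal.ofReal (r ^ (-(n:ℝ))) := by
            apply setLIntegral_mono' (hE.diff measurableSet_ball)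
            intro x hx
            apply ENNReal.ofReal_le_ofReal
            have : r ≤ ‖x‖ := by simpa using hx.2
            exact (hind x).trans (phi_le n ha hr this)
        _ = ENNReal.ofReal (r ^ (-(n:ℝ))) * volume (E \ Metric.ball 0 r) := setLIntegral_const _ _
        _ ≤ ENNReal.ofReal (r ^ (-(n:ℝ))) * ENNReal.ofReal s := by
            rw [← hEs]; gcongr; exact diff_subset
        _ = _ := by rw [← ENNReal.ofReal_mul (by positivity), hrn]
    have hLr := lf_one_le hr
    refine (mul_le_mul_right ((key r hr hr1).trans (add_le_add_right h2 _)) _).trans ?_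
    rw [← ENNReal.ofReal_add (by positivity) (by positivity), ← ENNReal.ofReal_mul (by positivity)]
    apply ENNReal.ofReal_le_ofReal
    rw [mul_add]
    refine add_le_add ?_ (hsmall s hs hs1)
    have h3 : logFac s ≤ ((2 * n : ℕ) : ℝ) * logFac r := by
      have := lf_pow hr (m := 2 * n) (by omega)
      rwa [hrs] at this
    have h4 : logFac s ^ a ≤ ((2 * n : ℕ) : ℝ) ^ a * logFac r ^ a := by
      rw [← Real.mul_rpow (by positivity) (by linarith)]
      exact Real.rpow_le_rpow (by linarith) h3 ha.le
    calc _ ≤ ((2 * n : ℕ) : ℝ) ^ a * logFac r ^ a * (C * logFac r ^ (-a)) := by gcongr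
      _ = ((2 * n : ℕ) : ℝ) ^ a * C * (logFac r ^ a * logFac r ^ (-a)) := by ring
      _ = _ := by
        rw [← Real.rpow_add (by linarith)]; simp
  · refine le_trans ?_ le_add_self
    have h2 : ∫⁻ x in E \ Metric.ball 0 1, ENNReal.ofReal |(Metric.ball z 1).indicator φ x| ≤
        volume (Metric.ball (0 : EuclideanSpace ℝ (Fin n)) 1) := by
      calc _ ≤ ∫⁻ x in E \ Metric.ball 0 1, (Metric.ball z 1).indicator 1 x := by
            apply setLIntegral_mono' (hE.diff measurableSet_ball)
            intro x hx
            by_cases hxz : x ∈ Metric.ball z 1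
            · have h1 : 1 ≤ ‖x‖ := by simpa using hx.2
              have h5 := phi_le n ha one_pos h1
              rw [Real.one_rpow] at h5
              rw [indicator_of_mem hxz (1 : EuclideanSpace ℝ (Fin n) → ℝ≥0∞), Pi.one_apply, ← ENNReal.ofReal_one]
              exact ENNReal.ofReal_le_ofReal ((hind x).trans h5)
            · simp [indicator_of_notMem hxz]
        _ ≤ ∫⁻ x, (Metric.ball z 1).indicator 1 x := setLIntegral_le_lintegral _ _
        _ = volume (Metric.ball z 1) := lintegral_indicator_one measurableSet_ball
        _ = _ := Measure.addHaar_ball_center _ _ _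
        _ ≤ _ := le_rfl
    refine mul_le_mul' ?_ ((key 1 one_pos le_rfl).trans (add_le_add_right h2 _))
    apply ENNReal.ofReal_le_ofReal
    exact Real.rpow_le_rpow (by linarith) (lf_anti one_pos hs1) ha.le
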